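/- Suppose the sequences γ = (r_k)_{k≥0}, σ = (s_k)_{k≥0}, τ = (t_k)_{k≥1} of q-nonnegative polynomials satisfy s_0 ≥_q t_1 and s_k ≥_q r_{k−1} + t_{k+1} for all k ≥ 1. Then both the Catalan–Stieltjes matrix C^{γ,σ,τ} and the Hankel matrix H^{γ,σ,τ} are q-totally positive. -/

import Mathlib

/-! Let `J` be the tridiagonal matrix with diagonal `s_k`, superdiagonal `r_k` and subdiagonal
`t_k`, so that row `n` of the Catalan–Stieltjes matrix `C` is row `0` of `J ^ n`.

The hypotheses say that each diagonal entry of `J` dominates the rest of its column. This gives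
a division-free factorization `J = P * Q` (`jac_eq_sum`): `P` is a staircase of ones, and `Q`
holds the excesses `s_k - r_{k-1} - t_{k+1}` in its even rows and the pairs `t_{k+1}, r_k` in
its odd rows. In `P` and in `Q` no two nonzero entries lie in north-east/south-west position, so
every minor is just the product of its diagonal entries (`qtp_of_noncrossing`), and `P`, `Q` are
`q`-totally positive.

Total positivity is preserved by products, by Cauchy–Binet (`qNonneg_det_mul`). Hence `J` is
`q`-totally positive, and so is `C`, by induction on the largest row index of a minor
(`qtp_of_rec`). The same applies to `Jᵀ`, whose Catalan–Stieltjes matrix `D` satisfies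
`D n k = (J ^ n) k 0`; since `J ^ (i + j) = J ^ i * J ^ j`, the Hankel matrix is `C * Dᵀ`
(`hankel_eq_sum`), and Cauchy–Binet applies once more. -/

open Polynomial

/-- A polynomial is `q`-nonnegative if all of its coefficients are nonnegative. -/
def QNonneg (f : Polynomial ℝ) : Prop := ∀ i, 0 ≤ f.coeff i

/-- An infinite matrix is `q`-totally positive if every minor (determinant of a square
submatrix with strictly increasing row and column indices) is `q`-nonnegative. -/
def QTP (M : ℕ → ℕ → Polynomial ℝ) : Prop :=
  ∀ (m : ℕ), 1 ≤ m → ∀ (i j : Fin m → ℕ), StrictMono i → StrictMono j →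
    QNonneg (Matrix.det (Matrix.of fun a b => M (i a) (j b)))

/-! ### The cone of `q`-nonnegative polynomials -/

lemma QNonneg.zero : QNonneg 0 := fun i => by simp

lemma QNonneg.one : QNonneg 1 := fun i => by
  rw [coeff_one]; split_ifs <;> norm_num

lemma QNonneg.add {f g : ℝ[X]} (hf : QNonneg f) (hg : QNonneg g) : QNonneg (f + g) :=
  fun i => by rw [coeff_add]; exact add_nonneg (hf i) (hg i)

lemma QNonneg.mul {f g : ℝ[X]} (hf : QNonneg f) (hg : QNonneg g) : QNonneg (f * g) :=
  fun i => by
    rw [coeff_mul]; exact Finset.sum_nonneg fun p _ => mul_nonneg (hf _) (hg _)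

lemma QNonneg.sum {ι : Type*} (s : Finset ι) {f : ι → ℝ[X]} (hf : ∀ i ∈ s, QNonneg (f i)) :
    QNonneg (∑ i ∈ s, f i) :=
  Finset.sum_induction f QNonneg (fun _ _ => QNonneg.add) QNonneg.zero hf

lemma QNonneg.prod {ι : Type*} (s : Finset ι) {f : ι → ℝ[X]} (hf : ∀ i ∈ s, QNonneg (f i)) :
    QNonneg (∏ i ∈ s, f i) :=
  Finset.prod_induction f QNonneg (fun _ _ => QNonneg.mul) QNonneg.one hf

lemma QNonneg.of_nsmul {n : ℕ} (hn : 0 < n) {f : ℝ[X]} (hf : QNonneg (n • f)) : QNonneg f :=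
  fun i => by
    have h := hf i
    rw [coeff_smul, nsmul_eq_mul] at h
    exact nonneg_of_mul_nonneg_right h (by exact_mod_cast hn)

/-! ### A nonnegativity form of the Cauchy–Binet formula -/

/-- The row expansion of the determinant of a product, antisymmetrized over all permutations.
Both sides count every increasing selection of the summation index `m!` times, which gives the
Cauchy–Binet formula without sorting the selections. -/
lemma factorial_smul_det_mul {m N : ℕ} (A : Matrix (Fin m) (Fin N) ℝ[X])
    (B : Matrix (Fin N) (Fin m) ℝ[X]) :
    m.factorial • (A * B).det =
      ∑ f : Fin m → Fin N, (A.submatrix id f).det * (B.submatrix f id).det := by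
  have expand : (A * B).det =
      ∑ f : Fin m → Fin N, (∏ a, A a (f a)) * (B.submatrix f id).det := by
    have h1 : A * B = fun a => ∑ k, A a k • B k := by
      funext a b
      simp [Matrix.mul_apply, Finset.sum_apply]
    rw [h1]
    change Matrix.detRowAlternating.toMultilinearMap _ = _
    rw [MultilinearMap.map_sum]
    refine Finset.sum_congr rfl fun f _ => ?_
    rw [MultilinearMap.map_smul_univ]
    rfl
  have perm (σ : Equiv.Perm (Fin m)) : (A * B).det =
      ∑ f : Fin m → Fin N,
        (Equiv.Perm.sign σ • ∏ a, A a (f (σ a))) * (B.submatrix f id).det := by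
    rw [expand, ← (Equiv.arrowCongr σ⁻¹ (Equiv.refl (Fin N))).sum_comp]
    refine Finset.sum_congr rfl fun f _ => ?_
    have h2 : B.submatrix (fun a => f (σ a)) id = (B.submatrix f id).submatrix σ id := rfl
    change (∏ a, A a (f (σ a))) * (B.submatrix (fun a => f (σ a)) id).det = _
    rw [h2, Matrix.det_permute, Units.smul_def, zsmul_eq_mul]
    ring
  calc m.factorial • (A * B).det = ∑ _σ : Equiv.Perm (Fin m), (A * B).det := by
        simp [Fintype.card_perm]
    _ = ∑ σ : Equiv.Perm (Fin m), ∑ f : Fin m → Fin N,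
        (Equiv.Perm.sign σ • ∏ a, A a (f (σ a))) * (B.submatrix f id).det :=
      Finset.sum_congr rfl fun σ _ => perm σ
    _ = _ := by
      rw [Finset.sum_comm]
      refine Finset.sum_congr rfl fun f _ => ?_
      rw [← Finset.sum_mul, ← Matrix.det_transpose (A.submatrix id f),
        Matrix.det_apply (A.submatrix id f).transpose]
      rfl

/-- If all increasing minors of `A` (in the columns) and of `B` (in the rows) are
`q`-nonnegative, then so is the determinant of their product. -/
lemma qNonneg_det_mul {m : ℕ} (N : ℕ) (A : Fin m → ℕ → ℝ[X]) (B : ℕ → Fin m → ℝ[X])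
    (hA : ∀ g : Fin m → ℕ, StrictMono g → QNonneg (Matrix.of fun a b => A a (g b)).det)
    (hB : ∀ g : Fin m → ℕ, StrictMono g → QNonneg (Matrix.of fun a b => B (g a) b).det) :
    QNonneg (Matrix.of fun a b => ∑ k ∈ Finset.range N, A a k * B k b).det := by
  let A' : Matrix (Fin m) (Fin N) ℝ[X] := Matrix.of fun a k => A a k
  let B' : Matrix (Fin N) (Fin m) ℝ[X] := Matrix.of fun k b => B k b
  have hAB : (Matrix.of fun a b => ∑ k ∈ Finset.range N, A a k * B k b) = A' * B' := by
    ext1 a b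
    simp [A', B', Matrix.mul_apply, Finset.sum_range]
  rw [hAB]
  refine QNonneg.of_nsmul m.factorial_pos ?_
  rw [factorial_smul_det_mul]
  refine QNonneg.sum _ fun f _ => ?_
  by_cases hf : Function.Injective f
  · -- Sorting `f` multiplies both minors by the same sign.
    set σ := Tuple.sort f with hσ
    have hmono : StrictMono (f ∘ σ) :=
      (Tuple.monotone_sort f).strictMono_of_injective (hf.comp σ.injective)
    have h1 : QNonneg (A'.submatrix id (f ∘ σ)).det := hA (fun b => (f (σ b) : ℕ)) hmono
    have h2 : QNonneg (B'.submatrix (f ∘ σ) id).det := hB (fun b => (f (σ b) : ℕ)) hmono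
    have e1 : A'.submatrix id (f ∘ σ) = (A'.submatrix id f).submatrix id σ := rfl
    have e2 : B'.submatrix (f ∘ σ) id = (B'.submatrix f id).submatrix σ id := rfl
    have h := h1.mul h2
    rw [e1, e2, Matrix.det_permute, Matrix.det_permute', mul_mul_mul_comm, ← Int.cast_mul,
      ← Units.val_mul, Int.units_mul_self] at h
    simpa using h
  · obtain ⟨a, b, hab, hne⟩ : ∃ a b, f a = f b ∧ a ≠ b := by
      simpa [Function.Injective] using hf
    have h0 : (B'.submatrix f id).det = 0 :=
      Matrix.det_zero_of_row_eq hne (by funext k; simp [hab])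
    rw [h0, mul_zero]
    exact QNonneg.zero

/-! ### Factorization of the tridiagonal coefficient matrix -/

/-- A matrix without a pair of nonzero entries in north-east/south-west position has only its
diagonal products as minors. -/
lemma qtp_of_noncrossing (M : ℕ → ℕ → ℝ[X]) (hM : ∀ i j, QNonneg (M i j))
    (h : ∀ i i' j j', i < i' → j < j' → M i j' * M i' j = 0) : QTP M := by
  intro m _ i j hi hj
  rw [Matrix.det_apply, Finset.sum_eq_single 1]
  · simpa using QNonneg.prod _ fun a _ => hM (i a) (j a)
  · intro σ _ hσ
    obtain ⟨a, b, hab, hlt⟩ : ∃ a b, a < b ∧ σ b < σ a := by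
      by_contra! hcon
      exact hσ ((Equiv.Perm.monotone_iff σ).1 fun a b hab => by
        rcases hab.eq_or_lt with rfl | hab
        · exact le_rfl
        · exact hcon a b hab)
    have hz := h _ _ _ _ (hi hlt) (hj hab)
    rw [smul_eq_zero_iff_eq, Finset.prod_eq_zero_iff]
    rcases mul_eq_zero.1 hz with h0 | h0
    · exact ⟨b, Finset.mem_univ _, h0⟩
    · exact ⟨a, Finset.mem_univ _, h0⟩
  · simp

lemma QTP.transpose {M : ℕ → ℕ → ℝ[X]} (hM : QTP M) : QTP fun i j => M j i := by
  intro m hm i j hi hj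
  have h := hM m hm j i hj hi
  rw [← Matrix.det_transpose] at h
  exact h

/-- In `QTP` the empty minor is excluded, but it equals `1`. -/
lemma QTP.det {M : ℕ → ℕ → ℝ[X]} (hM : QTP M) {m : ℕ} {i j : Fin m → ℕ} (hi : StrictMono i)
    (hj : StrictMono j) : QNonneg (Matrix.of fun a b => M (i a) (j b)).det := by
  rcases Nat.eq_zero_or_pos m with rfl | hm
  · rw [Matrix.det_fin_zero]
    exact QNonneg.one
  · exact hM m hm i j hi hj

/-- The tridiagonal coefficient matrix `J` of the recurrence: row `n + 1` of the
Catalan–Stieltjes matrix is row `n` times `J`. -/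
noncomputable def jac (r s t : ℕ → ℝ[X]) (k l : ℕ) : ℝ[X] :=
  if l = k + 1 then r k else if l = k then s k else if k = l + 1 then t k else 0

/-- The left factor of `jac`: row `k` has ones in the columns `2k - 1`, `2k`, `2k + 1`. -/
noncomputable def leftFactor (k m : ℕ) : ℝ[X] :=
  if m + 1 = 2 * k ∨ m = 2 * k ∨ m = 2 * k + 1 then 1 else 0

/-- The right factor of `jac`: row `2k` holds the excess `s_k - r_{k-1} - t_{k+1}` of the
`k`-th column (with `r_{-1} = 0`) in column `k`, and row `2k + 1` holds `t_{k+1}` and `r_k`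
in the columns `k` and `k + 1`. -/
noncomputable def rightFactor (r s t : ℕ → ℝ[X]) (m l : ℕ) : ℝ[X] :=
  if m = 2 * l then (if l = 0 then s 0 - t 1 else s l - (r (l - 1) + t (l + 1)))
  else if m = 2 * l + 1 then t (l + 1)
  else if m + 1 = 2 * l then r (l - 1) else 0

lemma qtp_leftFactor : QTP leftFactor := by
  apply qtp_of_noncrossing
  · intro i j
    unfold leftFactor
    split_ifs
    exacts [QNonneg.one, QNonneg.zero]
  · intro i i' j j' hi hj
    unfold leftFactor
    split_ifs <;> first | omega | simp

section
variable {r s t : ℕ → ℝ[X]}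

lemma qtp_rightFactor (hr : ∀ k, QNonneg (r k)) (ht : ∀ k, 1 ≤ k → QNonneg (t k))
    (h0 : QNonneg (s 0 - t 1)) (h1 : ∀ k, 1 ≤ k → QNonneg (s k - (r (k - 1) + t (k + 1)))) :
    QTP (rightFactor r s t) := by
  apply qtp_of_noncrossing
  · intro m l
    unfold rightFactor
    split_ifs
    exacts [h0, h1 l (by omega), ht _ (by omega), hr _, QNonneg.zero]
  · intro i i' j j' hi hj
    have key : ∀ m l, ¬ (2 * l ≤ m + 1 ∧ m ≤ 2 * l + 1) → rightFactor r s t m l = 0 := by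
      intro m l h
      unfold rightFactor
      rw [if_neg (by omega), if_neg (by omega), if_neg (by omega)]
    by_cases h : 2 * j' ≤ i + 1 ∧ i ≤ 2 * j' + 1
    · rw [key i' j (by omega), mul_zero]
    · rw [key i j' h, zero_mul]

lemma jac_eq_sum (k l : ℕ) :
    jac r s t k l =
      ∑ m ∈ Finset.range (2 * k + 2), leftFactor k m * rightFactor r s t m l := by
  rcases k with _ | k
  · rw [Finset.sum_range_succ, Finset.sum_range_succ]
    rcases l with _ | _ | l
    · simp [jac, leftFactor, rightFactor]
    · simp [jac, leftFactor, rightFactor]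
    · have h1 : ¬ 1 = 2 * (l + 1 + 1) := by omega
      simp [jac, leftFactor, rightFactor, h1]
  · have hz : ∑ m ∈ Finset.range (2 * k + 1), leftFactor (k + 1) m * rightFactor r s t m l = 0 :=
      Finset.sum_eq_zero fun m hm => by
        have := Finset.mem_range.1 hm
        rw [leftFactor, if_neg (by omega), zero_mul]
    rw [show 2 * (k + 1) + 2 = 2 * k + 1 + 1 + 1 + 1 by ring, Finset.sum_range_succ,
      Finset.sum_range_succ, Finset.sum_range_succ, hz]
    have e1 : leftFactor (k + 1) (2 * k + 1) = 1 := if_pos (by omega)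
    have e2 : leftFactor (k + 1) (2 * k + 1 + 1) = 1 := if_pos (by omega)
    have e3 : leftFactor (k + 1) (2 * k + 1 + 1 + 1) = 1 := if_pos (by omega)
    rw [e1, e2, e3]
    unfold jac rightFactor
    rcases lt_trichotomy l (k + 1) with hl | rfl | hl
    · rcases Nat.lt_succ_iff_lt_or_eq.1 hl with hl | rfl
      · simp (disch := omega) only [if_neg]
        simp
      · simp (disch := omega) only [if_neg]
        simp
    · simp (disch := omega) only [if_neg, if_pos]
      simp only [Nat.add_sub_cancel, if_true]
      ring
    · rcases (Nat.succ_le_of_lt hl).eq_or_lt with rfl | hl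
      · simp (disch := omega) only [if_neg, if_pos]
        simp
      · simp (disch := omega) only [if_neg]
        simp

lemma qtp_jac (hr : ∀ k, QNonneg (r k)) (ht : ∀ k, 1 ≤ k → QNonneg (t k))
    (h0 : QNonneg (s 0 - t 1)) (h1 : ∀ k, 1 ≤ k → QNonneg (s k - (r (k - 1) + t (k + 1)))) :
    QTP (jac r s t) := by
  intro m _ i j hi hj
  -- A common summation range for all rows of the minor.
  have hN (a : Fin m) (b : Fin m) : jac r s t (i a) (j b) =
      ∑ x ∈ Finset.range (2 * (∑ a, i a) + 2),
        leftFactor (i a) x * rightFactor r s t x (j b) := by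
    rw [jac_eq_sum]
    have hle : i a ≤ ∑ a, i a := Finset.single_le_sum (fun _ _ => Nat.zero_le _) (Finset.mem_univ a)
    refine Finset.sum_subset (Finset.range_subset_range.2 (by omega)) fun x _ hx => ?_
    have := mt Finset.mem_range.2 hx
    rw [leftFactor, if_neg (by omega), zero_mul]
  simp only [hN]
  exact qNonneg_det_mul _ (fun a x => leftFactor (i a) x)
    (fun x b => rightFactor r s t x (j b)) (fun g hg => qtp_leftFactor.det hi hg)
    (fun g hg => (qtp_rightFactor hr ht h0 h1).det hg hj)

end

/-! ### Matrices generated row by row from a totally positive matrix -/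

/-- If row `0` of `c` is the first unit vector and each row is the previous one times a
`q`-totally positive matrix `K` (with finitely supported columns), then `c` is `q`-totally
positive. -/
lemma qtp_of_rec (c K : ℕ → ℕ → ℝ[X]) (hK : QTP K) (h0 : ∀ k, c 0 k = if k = 0 then 1 else 0)
    (hstep : ∀ n l N, l + 2 ≤ N → c (n + 1) l = ∑ k ∈ Finset.range N, c n k * K k l) :
    QTP c := by
  -- A row with index `0` can be split off, so rows with positive index suffice.
  have reduce (n : ℕ)
      (hpos : ∀ (m : ℕ) (i j : Fin m → ℕ), StrictMono i → StrictMono j →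
        (∀ a, 1 ≤ i a ∧ i a ≤ n) → QNonneg (Matrix.of fun a b => c (i a) (j b)).det)
      (m : ℕ) (i j : Fin m → ℕ) (hi : StrictMono i) (hj : StrictMono j) (hn : ∀ a, i a ≤ n) :
      QNonneg (Matrix.of fun a b => c (i a) (j b)).det := by
    rcases m with _ | m
    · exact hpos 0 i j hi hj fun a => a.elim0
    by_cases hi0 : i 0 = 0
    · rw [Matrix.det_succ_row_zero, Finset.sum_eq_single 0]
      · have hminor := hpos m (i ∘ Fin.succ) (j ∘ Fin.succ) (hi.comp Fin.strictMono_succ)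
          (hj.comp Fin.strictMono_succ)
          fun a => ⟨by have := hi (Fin.succ_pos a); simp only [Function.comp]; omega, hn _⟩
        have hentry : QNonneg (c (i 0) (j 0)) := by
          rw [hi0, h0]
          split_ifs
          exacts [QNonneg.one, QNonneg.zero]
        have := hentry.mul hminor
        simpa [Matrix.submatrix, Function.comp_def] using this
      · intro b _ hb
        have hjb : j b ≠ 0 := by have := hj (Fin.pos_iff_ne_zero.2 hb); omega
        simp [hi0, h0, hjb]
      · simp
    · exact hpos _ i j hi hj fun a =>
        ⟨by have := hi.monotone (Fin.zero_le a); omega, hn a⟩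
  have main (n : ℕ) : ∀ (m : ℕ) (i j : Fin m → ℕ), StrictMono i → StrictMono j →
      (∀ a, i a ≤ n) → QNonneg (Matrix.of fun a b => c (i a) (j b)).det := by
    induction n with
    | zero =>
      refine reduce 0 fun m i j hi hj h => ?_
      rcases m with _ | m
      · rw [Matrix.det_fin_zero]
        exact QNonneg.one
      · have := h 0
        omega
    | succ n ih =>
      refine reduce (n + 1) fun m i j hi hj h => ?_
      have hi' : StrictMono fun a => i a - 1 := fun a b hab => by
        have := hi hab
        have := h a
        have := h b
        dsimp only
        omega
      have hN (a b : Fin m) : c (i a) (j b) =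
          ∑ k ∈ Finset.range ((∑ b, j b) + 2), c (i a - 1) k * K k (j b) := by
        have hle : j b ≤ ∑ b, j b :=
          Finset.single_le_sum (fun _ _ => Nat.zero_le _) (Finset.mem_univ b)
        rw [← hstep (i a - 1) (j b) _ (by omega), Nat.sub_add_cancel (h a).1]
      simp only [hN]
      exact qNonneg_det_mul _ (fun a k => c (i a - 1) k) (fun k b => K k (j b))
        (fun g hg => ih m _ g hi' hg fun a => by have := h a; omega)
        (fun g hg => hK.det hg hj)
  intro m _ i j hi hj
  exact main (∑ a, i a) m i j hi hj fun a =>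
    Finset.single_le_sum (fun _ _ => Nat.zero_le _) (Finset.mem_univ a)

/-- The Catalan–Stieltjes matrix of the transposed coefficient matrix, so that
`dual r s t n k` is the entry `(k, 0)` of `(jac r s t) ^ n`. -/
noncomputable def dual (r s t : ℕ → ℝ[X]) : ℕ → ℕ → ℝ[X]
  | 0, k => if k = 0 then 1 else 0
  | n + 1, k => ∑ l ∈ Finset.range (k + 2), dual r s t n l * jac r s t k l

section
variable {r s t : ℕ → ℝ[X]}

lemma dual_succ (n k N : ℕ) (hN : k + 2 ≤ N) :
    dual r s t (n + 1) k = ∑ l ∈ Finset.range N, dual r s t n l * jac r s t k l := by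
  rw [dual]
  refine Finset.sum_subset (Finset.range_subset_range.2 hN) fun l _ hl => ?_
  have := mt Finset.mem_range.2 hl
  rw [jac, if_neg (by omega), if_neg (by omega), if_neg (by omega), mul_zero]

lemma stieltjes_succ {c : ℕ → ℕ → ℝ[X]}
    (hrec0 : ∀ n, c (n + 1) 0 = s 0 * c n 0 + t 1 * c n 1)
    (hrec : ∀ n k, c (n + 1) (k + 1) =
      r k * c n k + s (k + 1) * c n (k + 1) + t (k + 2) * c n (k + 2))
    (n l N : ℕ) (hN : l + 2 ≤ N) :
    c (n + 1) l = ∑ k ∈ Finset.range N, c n k * jac r s t k l := by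
  have h1 : ∑ k ∈ Finset.range N, c n k * jac r s t k l =
      ∑ k ∈ Finset.range (l + 2), c n k * jac r s t k l := by
    refine (Finset.sum_subset (Finset.range_subset_range.2 hN) fun k _ hk => ?_).symm
    have := mt Finset.mem_range.2 hk
    rw [jac, if_neg (by omega), if_neg (by omega), if_neg (by omega), mul_zero]
  rw [h1]
  rcases l with _ | l
  · rw [hrec0, Finset.sum_range_succ, Finset.sum_range_succ]
    simp [jac]
    ring
  · have hz : ∑ k ∈ Finset.range l, c n k * jac r s t k (l + 1) = 0 :=
      Finset.sum_eq_zero fun k hk => by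
        have := Finset.mem_range.1 hk
        rw [jac, if_neg (by omega), if_neg (by omega), if_neg (by omega), mul_zero]
    rw [hrec, Finset.sum_range_succ, Finset.sum_range_succ, Finset.sum_range_succ, hz]
    simp [jac]
    ring

/-- The Hankel matrix factors as `c` times the transpose of `dual r s t`: this is
`J ^ (i + j) = J ^ i * J ^ j` at the entry `(0, 0)`. -/
lemma hankel_eq_sum {c : ℕ → ℕ → ℝ[X]} (hupper : ∀ n k, n < k → c n k = 0)
    (hstep : ∀ n l N, l + 2 ≤ N → c (n + 1) l = ∑ k ∈ Finset.range N, c n k * jac r s t k l)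
    (j : ℕ) : ∀ i N, i + j < N →
      c (i + j) 0 = ∑ k ∈ Finset.range N, c i k * dual r s t j k := by
  induction j with
  | zero =>
    intro i N hN
    have : 0 < N := by omega
    simp [dual, this]
  | succ j ih =>
    intro i N hN
    rw [show i + (j + 1) = i + 1 + j by ring, ih (i + 1) N (by omega)]
    have hc (k : ℕ) (hk : k < N) :
        c (i + 1) k = ∑ l ∈ Finset.range N, c i l * jac r s t l k := by
      rw [hstep i k (N + 1) (by omega), Finset.sum_range_succ, hupper i N (by omega), zero_mul,
        add_zero]
    have hd (l : ℕ) (hl : l < N) : c i l * dual r s t (j + 1) l =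
        c i l * ∑ k ∈ Finset.range N, dual r s t j k * jac r s t l k := by
      by_cases h : l + 2 ≤ N
      · rw [dual_succ j l N h]
      · rw [hupper i l (by omega), zero_mul, zero_mul]
    rw [Finset.sum_congr rfl fun k hk => by rw [hc k (Finset.mem_range.1 hk)],
      Finset.sum_congr rfl fun l hl => hd l (Finset.mem_range.1 hl)]
    simp only [Finset.sum_mul, Finset.mul_sum]
    rw [Finset.sum_comm]
    exact Finset.sum_congr rfl fun l _ => Finset.sum_congr rfl fun k _ => by ring

end

theorem stmt1 (r s t : ℕ → Polynomial ℝ) (c : ℕ → ℕ → Polynomial ℝ)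
    (hr : ∀ k, QNonneg (r k)) (hs : ∀ k, QNonneg (s k)) (ht : ∀ k, 1 ≤ k → QNonneg (t k))
    (hc00 : c 0 0 = 1)
    (hupper : ∀ n k, n < k → c n k = 0)
    (hrec0 : ∀ n, c (n + 1) 0 = s 0 * c n 0 + t 1 * c n 1)
    (hrec : ∀ n k, c (n + 1) (k + 1) =
      r k * c n k + s (k + 1) * c n (k + 1) + t (k + 2) * c n (k + 2))
    (hcond : (QNonneg (s 0 - t 1) ∧ ∀ k, 1 ≤ k → QNonneg (s k - (r (k - 1) + t (k + 1))))) :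
    QTP c ∧ QTP (fun i j => c (i + j) 0) := by
  have hJ : QTP (jac r s t) := qtp_jac hr ht hcond.1 hcond.2
  have hstep := stieltjes_succ hrec0 hrec
  have hC : QTP c := by
    refine qtp_of_rec c _ hJ (fun k => ?_) hstep
    rcases k with _ | k
    · simpa using hc00
    · simpa using hupper 0 (k + 1) (by omega)
  have hD : QTP (dual r s t) :=
    qtp_of_rec _ _ hJ.transpose (fun k => by rw [dual]) fun n l N hN => dual_succ n l N hN
  refine ⟨hC, fun m _ i j hi hj => ?_⟩
  have hN (a b : Fin m) : c (i a + j b) 0 =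
      ∑ k ∈ Finset.range ((∑ a, i a) + (∑ b, j b) + 1), c (i a) k * dual r s t (j b) k := by
    have h1 : i a ≤ ∑ a, i a :=
      Finset.single_le_sum (fun _ _ => Nat.zero_le _) (Finset.mem_univ a)
    have h2 : j b ≤ ∑ b, j b :=
      Finset.single_le_sum (fun _ _ => Nat.zero_le _) (Finset.mem_univ b)
    exact hankel_eq_sum hupper hstep (j b) (i a) _ (by omega)
  simp only [hN]
  exact qNonneg_det_mul _ (fun a k => c (i a) k) (fun k b => dual r s t (j b) k)
    (fun g hg => hC.det hi hg) (fun g hg => hD.transpose.det hg hj)
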